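/- Let G be any group and E a separable dual Banach G-module. Then every bounded function b : G → E satisfying the cocycle identity b(gh) = g•b(h) + b(g) for all g, h ∈ G is a coboundary: there exists v ∈ E such that b(g) = g•v − v for all g ∈ G. Equivalently, Hb^1(G, E) = 0. -/

import Mathlib

/-- The contragredient action of `G` on the continuous dual of `F` induced by an
isometric action `ρ` of `G` on `F`: `(g • φ)(v) = φ (g⁻¹ • v)`. -/
def contragredient {G : Type*} [Group G] {F : Type*} [NormedAddCommGroup F]
    [NormedSpace ℝ F] (ρ : G →* (F ≃ₗᵢ[ℝ] F)) : G → (F →L[ℝ] ℝ) → (F →L[ℝ] ℝ) :=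
  fun g φ => φ.comp (ρ g⁻¹).toLinearIsometry.toContinuousLinearMap

theorem exists_minimal_aux {V : Type*} [TopologicalSpace V] (Q : Set V → Prop)
    (hQ : ∀ S : Set (Set V), (∀ s ∈ S, Q s) → Q (⋂₀ S))
    (hcl : ∀ s, Q s → IsClosed s) (K : Set V) (hK : IsCompact K) (hne : K.Nonempty)
    (hQK : Q K) :
    ∃ M, M ⊆ K ∧ Q M ∧ M.Nonempty ∧ ∀ N, N ⊆ M → Q N → N.Nonempty → N = M := by
  obtain ⟨M, hMK, hM⟩ := zorn_superset_nonempty {s : Set V | s ⊆ K ∧ Q s ∧ s.Nonempty}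
    (by
      intro c hc hchain hcne
      refine ⟨⋂₀ c, ⟨?_, hQ c (fun s hs => (hc hs).2.1), ?_⟩, fun s hs => Set.sInter_subset_of_mem hs⟩
      · obtain ⟨s, hs⟩ := hcne
        exact (Set.sInter_subset_of_mem hs).trans (hc hs).1
      · have : Nonempty c := hcne.to_subtype
        refine IsCompact.nonempty_sInter_of_directed_nonempty_isCompact_isClosed ?_ ?_ ?_ ?_
        · intro x hx y hy
          rcases hchain.total hx hy with h | h
          · exact ⟨x, hx, subset_rfl, h⟩
          · exact ⟨y, hy, h, subset_rfl⟩
        · exact fun s hs => (hc hs).2.2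
        · exact fun s hs => hK.of_isClosed_subset (hcl s (hc hs).2.1) (hc hs).1
        · exact fun s hs => hcl s (hc hs).2.1)
    K ⟨subset_rfl, hQK, hne⟩
  refine ⟨M, hMK, hM.prop.2.1, hM.prop.2.2, fun N hN hQN hNne => ?_⟩
  exact subset_antisymm hN (hM.le_of_le ⟨hN.trans hMK, hQN, hNne⟩ hN)

theorem fixed_point_aux {G V : Type*} [Group G] [AddCommGroup V] [Module ℝ V]
    [TopologicalSpace V] [T2Space V] (N : Seminorm ℝ V)
    (hN0 : ∀ x, N x = 0 → x = 0)
    (hball : ∀ (c : V) (r : ℝ), IsClosed {x | N (x - c) ≤ r})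
    (hcomp : ∀ r : ℝ, IsCompact {x | N x ≤ r})
    (u : ℕ → V) (hu : ∀ ε > 0, ∀ x, ∃ n, N (x - u n) < ε)
    (T : G → V → V) (hTc : ∀ g, Continuous (T g)) (hT1 : ∀ x, T 1 x = x)
    (hTm : ∀ g h x, T (g * h) x = T g (T h x))
    (hTi : ∀ g x y, N (T g x - T g y) = N (x - y))
    (hTa : ∀ g x y (a b : ℝ), a + b = 1 → T g (a • x + b • y) = a • T g x + b • T g y)
    (C : ℝ) (hC : ∀ g, N (T g 0) ≤ C) : ∃ x, ∀ g, T g x = x := by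
  have hball' : ∀ (c : V) (r : ℝ), IsClosed {x | N (c - x) ≤ r} := by
    intro c r
    simpa only [map_sub_rev N] using hball c r
  have hcb : ∀ (r : ℝ) (x y z : V) (a b : ℝ), 0 ≤ a → 0 ≤ b → a + b = 1 →
      N (z - x) ≤ r → N (z - y) ≤ r → N (z - (a • x + b • y)) ≤ r := by
    intro r x y z a b ha hb hab hx hy
    have h1 : z - (a • x + b • y) = a • (z - x) + b • (z - y) := by
      have : z = (a + b) • z := by rw [hab, one_smul]
      conv_lhs => rw [this]
      module
    rw [h1]
    calc _ ≤ N (a • (z - x)) + N (b • (z - y)) := map_add_le_add N _ _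
      _ = a * N (z - x) + b * N (z - y) := by
        rw [map_smul_eq_mul, map_smul_eq_mul, Real.norm_of_nonneg ha, Real.norm_of_nonneg hb]
      _ ≤ a * r + b * r := by gcongr
      _ = r := by rw [← add_mul, hab, one_mul]
  let K0 : Set V := {x | ∀ g, N (T g x) ≤ C}
  have hK0cl : IsClosed K0 := by
    have : K0 = ⋂ g, (T g) ⁻¹' {x | N (x - 0) ≤ C} := by ext; simp [K0]
    rw [this]
    exact isClosed_iInter fun g => (hball 0 C).preimage (hTc g)
  have hK0c : IsCompact K0 := (hcomp C).of_isClosed_subset hK0cl (by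
    intro x hx
    simpa [hT1] using hx 1)
  have hK0i : ∀ g, ∀ x ∈ K0, T g x ∈ K0 := by
    intro g x hx h
    rw [← hTm]; exact hx _
  have hK0v : Convex ℝ K0 := by
    intro x hx y hy a b ha hb hab g
    have := hcb C (T g x) (T g y) 0 a b ha hb hab (by simpa using hx g) (by simpa using hy g)
    rw [hTa g x y a b hab]
    rwa [zero_sub, map_neg_eq_map] at this
  obtain ⟨K, hKK0, ⟨hKcl, hKv, hKi⟩, hKne, hKmin⟩ := exists_minimal_aux
    (fun s : Set V => IsClosed s ∧ Convex ℝ s ∧ ∀ g, ∀ x ∈ s, T g x ∈ s)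
    (fun S hS => ⟨isClosed_sInter fun s hs => (hS s hs).1, convex_sInter fun s hs => (hS s hs).2.1,
      fun g x hx s hs => (hS s hs).2.2 g x (hx s hs)⟩)
    (fun s hs => hs.1) K0 hK0c ⟨0, hC⟩ ⟨hK0cl, hK0v, hK0i⟩
  have hKc : IsCompact K := hK0c.of_isClosed_subset hKcl hKK0
  obtain ⟨X, hXK, ⟨hXcl, hXi⟩, hXne, hXmin⟩ := exists_minimal_aux
    (fun s : Set V => IsClosed s ∧ ∀ g, ∀ x ∈ s, T g x ∈ s)
    (fun S hS => ⟨isClosed_sInter fun s hs => (hS s hs).1,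
      fun g x hx s hs => (hS s hs).2 g x (hx s hs)⟩)
    (fun s hs => hs.1) K hKc hKne ⟨hKcl, hKi⟩
  have hXc : IsCompact X := hKc.of_isClosed_subset hXcl hXK
  have hNX : ∀ x ∈ X, N x ≤ C := fun x hx => by simpa [hT1] using hKK0 (hXK hx) 1
  let D : Set ℝ := {r | ∃ x ∈ X, ∃ y ∈ X, r = N (x - y)}
  have hDb : BddAbove D := by
    refine ⟨C + C, ?_⟩
    rintro r ⟨x, hx, y, hy, rfl⟩
    exact (map_sub_le_add N x y).trans (add_le_add (hNX x hx) (hNX y hy))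
  have hDne : D.Nonempty := by
    obtain ⟨x, hx⟩ := hXne
    exact ⟨_, x, hx, x, hx, rfl⟩
  set d := sSup D with hd
  have hdle : ∀ x ∈ X, ∀ y ∈ X, N (x - y) ≤ d := fun x hx y hy =>
    le_csSup hDb ⟨x, hx, y, hy, rfl⟩
  rcases le_or_gt d 0 with hd0 | hd0
  · obtain ⟨x, hx⟩ := hXne
    refine ⟨x, fun g => sub_eq_zero.mp (hN0 _ (le_antisymm ?_ (apply_nonneg N _)))⟩
    exact (hdle _ (hXi g x hx) _ hx).trans hd0
  exfalso
  -- a relatively open piece of `X` with small diameter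
  obtain ⟨O, hO, ⟨w, hwO, hwX⟩, hsmall⟩ : ∃ O : Set V, IsOpen O ∧ (O ∩ X).Nonempty ∧
      ∀ x ∈ O ∩ X, ∀ y ∈ O ∩ X, N (x - y) ≤ d / 2 := by
    have : CompactSpace X := isCompact_iff_compactSpace.mp hXc
    have : Nonempty X := hXne.to_subtype
    obtain ⟨n, hn⟩ := nonempty_interior_of_iUnion_of_closed
      (f := fun n => ((↑) : X → V) ⁻¹' {x | N (x - u n) ≤ d / 4})
      (fun n => (hball _ _).preimage continuous_subtype_val)
      (by
        ext x
        simp only [Set.mem_iUnion, Set.mem_univ, iff_true]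
        obtain ⟨n, hn⟩ := hu (d / 4) (by positivity) x
        exact ⟨n, hn.le⟩)
    obtain ⟨O, hO, hOe⟩ := isOpen_induced_iff.mp
      (isOpen_interior (s := ((↑) : X → V) ⁻¹' {x | N (x - u n) ≤ d / 4}))
    have key : ∀ x ∈ O ∩ X, N (x - u n) ≤ d / 4 := by
      rintro x ⟨hxO, hxX⟩
      have : (⟨x, hxX⟩ : X) ∈ ((↑) : X → V) ⁻¹' O := hxO
      rw [hOe] at this
      have h' := interior_subset this
      exact h'
    refine ⟨O, hO, ?_, ?_⟩
    · obtain ⟨x, hx⟩ := hn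
      rw [← hOe] at hx
      exact ⟨x, hx, x.2⟩
    · intro x hx y hy
      have h1 := key x hx
      have h2 := key y hy
      have h3 : x - y = (x - u n) - (y - u n) := by abel
      rw [h3]
      linarith [map_sub_le_add N (x - u n) (y - u n)]
  have hcover : X ⊆ ⋃ g, (T g) ⁻¹' O := by
    by_contra hnot
    obtain ⟨x, hxX, hx⟩ := Set.not_subset.mp hnot
    have := hXmin (X ∩ (⋃ g, (T g) ⁻¹' O)ᶜ) Set.inter_subset_left
      ⟨hXcl.inter (isOpen_iUnion fun g => hO.preimage (hTc g)).isClosed_compl, by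
        rintro g y ⟨hyX, hy⟩
        refine ⟨hXi g y hyX, fun h => hy ?_⟩
        obtain ⟨k, hk⟩ := Set.mem_iUnion.mp h
        refine Set.mem_iUnion.mpr ⟨k * g, ?_⟩
        simpa [hTm] using hk⟩ ⟨x, hxX, hx⟩
    rw [← this] at hwX
    exact hwX.2 (Set.mem_iUnion.mpr ⟨1, by simpa [hT1] using hwO⟩)
  obtain ⟨t, ht⟩ := hXc.elim_finite_subcover _ (fun g => hO.preimage (hTc g)) hcover
  have hmove : ∀ g x y, N (x - T g y) = N (T g⁻¹ x - y) := by
    intro g x y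
    rw [← hTi g (T g⁻¹ x) y, ← hTm, mul_inv_cancel, hT1]
  have hnear : ∀ y ∈ X, ∃ g ∈ t, N (y - T g⁻¹ w) ≤ d / 2 := by
    intro y hy
    obtain ⟨g, hg, hgy⟩ := Set.mem_iUnion₂.mp (ht hy)
    refine ⟨g, hg, ?_⟩
    rw [hmove, inv_inv]
    exact hsmall _ ⟨hgy, hXi g y hy⟩ _ ⟨hwO, hwX⟩
  have htne : t.Nonempty := by
    obtain ⟨g, hg, -⟩ := hnear w hwX
    exact ⟨g, hg⟩
  have hn : (0 : ℝ) < t.card := by exact_mod_cast htne.card_pos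
  let n : ℝ := t.card
  have hn' : 0 < n := hn
  let z : V := ∑ g ∈ t, n⁻¹ • T g⁻¹ w
  have hsum1 : ∑ g ∈ t, n⁻¹ = 1 := by
    rw [Finset.sum_const, nsmul_eq_mul]; exact mul_inv_cancel₀ hn.ne'
  have hzK : z ∈ K := hKv.sum_mem (fun _ _ => by positivity) hsum1
    (fun g _ => hKi _ _ (hXK hwX))
  let r : ℝ := d - n⁻¹ * (d / 2)
  have hrd : r < d := by
    have : 0 < n⁻¹ * (d / 2) := by positivity
    simp only [r]; linarith
  have hz : ∀ y ∈ X, N (y - z) ≤ r := by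
    intro y hy
    obtain ⟨g, hg, hgy⟩ := hnear y hy
    have h1 : y - z = ∑ g ∈ t, n⁻¹ • (y - T g⁻¹ w) := by
      simp only [smul_sub, Finset.sum_sub_distrib, z]
      rw [← Finset.sum_smul, hsum1, one_smul]
    classical
    have h2 : N (y - z) ≤ ∑ g ∈ t, n⁻¹ * N (y - T g⁻¹ w) := by
      rw [h1]
      refine (Finset.le_sum_of_subadditive N (map_zero N).le (map_add_le_add N) _ _).trans (Finset.sum_le_sum fun g _ => ?_)
      rw [map_smul_eq_mul, Real.norm_of_nonneg (by positivity)]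
    refine h2.trans ?_
    have h3 : ∑ k ∈ t, n⁻¹ * N (y - T k⁻¹ w) ≤
        ∑ k ∈ t, (n⁻¹ * d - if k = g then n⁻¹ * (d / 2) else 0) := by
      refine Finset.sum_le_sum fun k hk => ?_
      split_ifs with h
      · subst h
        have := mul_le_mul_of_nonneg_left hgy (inv_nonneg.mpr hn'.le)
        linarith
      · have := mul_le_mul_of_nonneg_left (hdle y hy _ (hXi k⁻¹ w hwX)) (inv_nonneg.mpr hn'.le)
        linarith
    refine h3.trans (le_of_eq ?_)
    rw [Finset.sum_sub_distrib, Finset.sum_ite_eq' t g, if_pos hg, ← Finset.sum_mul, hsum1, one_mul]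
  have hfin := hKmin (K ∩ ⋂ x ∈ X, {y | N (x - y) ≤ r}) Set.inter_subset_left
    ⟨hKcl.inter (isClosed_biInter fun x _ => hball' x r), by
      refine hKv.inter (convex_iInter₂ fun x _ => ?_)
      intro y hy y' hy' a b ha hb hab
      exact hcb r y y' x a b ha hb hab hy hy', by
      rintro g y ⟨hyK, hy⟩
      refine ⟨hKi g y hyK, ?_⟩
      simp only [Set.mem_iInter, Set.mem_ofPred_eq] at hy ⊢
      intro x hx
      rw [hmove]
      exact hy _ (hXi _ _ hx)⟩
    ⟨z, hzK, by simpa using hz⟩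
  obtain ⟨s, ⟨x, hx, y, hy, rfl⟩, hs⟩ := exists_lt_of_lt_csSup hDne hrd
  have hyK := hXK hy
  rw [← hfin] at hyK
  have := hyK.2
  simp only [Set.mem_iInter, Set.mem_ofPred_eq] at this
  exact absurd (this x hx) (not_le.mpr hs)

/-- `Hb^1(G,E) = 0` for every separable dual Banach `G`-module
`E = F*`: every bounded cocycle `b : G → E` (i.e. `b (g h) = g • b h + b g`) is a
coboundary `b g = g • v - v`. -/
theorem bounded_cocycle_is_coboundary.{u}
    {G : Type*} [Group G]
    (F : Type u) [NormedAddCommGroup F] [NormedSpace ℝ F] [CompleteSpace F]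
    (ρ : G →* (F ≃ₗᵢ[ℝ] F))
    (hsep : TopologicalSpace.SeparableSpace (F →L[ℝ] ℝ))
    (b : G → (F →L[ℝ] ℝ)) (hb : ∃ C : ℝ, ∀ g : G, ‖b g‖ ≤ C)
    (hcoc : ∀ g h : G, b (g * h) = contragredient ρ g (b h) + b g) :
    ∃ v : F →L[ℝ] ℝ, ∀ g : G, b g = contragredient ρ g v - v := by
  obtain ⟨C, hC⟩ := hb
  have hb1 : b 1 = 0 := by
    have h := hcoc 1 1
    have h2 : contragredient ρ 1 (b 1) = b 1 := by
      ext v; simp [contragredient]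
    rw [h2, mul_one] at h
    simpa using h
  let N : Seminorm ℝ (WeakDual ℝ F) :=
    (normSeminorm ℝ (StrongDual ℝ F)).comp (WeakDual.toStrongDual (𝕜 := ℝ) (E := F)).toLinearMap
  have hNe : ∀ x : WeakDual ℝ F, N x = ‖WeakDual.toStrongDual x‖ := fun x => rfl
  let T : G → WeakDual ℝ F → WeakDual ℝ F := fun g x =>
    StrongDual.toWeakDual (contragredient ρ g (WeakDual.toStrongDual x) + b g)
  have hTe : ∀ g x, WeakDual.toStrongDual (T g x) =
    contragredient ρ g (WeakDual.toStrongDual x) + b g := fun g x => rfl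
  have hcball : ∀ (c : WeakDual ℝ F) (r : ℝ), {x : WeakDual ℝ F | N (x - c) ≤ r} =
      WeakDual.toStrongDual ⁻¹' Metric.closedBall (WeakDual.toStrongDual c) r := by
    intro c r
    ext x
    simp [hNe, dist_eq_norm]
  have hiso : ∀ (g : G) (φ : F →L[ℝ] ℝ), ‖contragredient ρ g φ‖ = ‖φ‖ := by
    intro g φ
    exact ContinuousLinearMap.opNorm_comp_linearIsometryEquiv φ (ρ g⁻¹)
  have hsub : ∀ (g : G) (φ ψ : F →L[ℝ] ℝ),
      contragredient ρ g φ - contragredient ρ g ψ = contragredient ρ g (φ - ψ) := by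
    intro g φ ψ; ext v; simp [contragredient]
  obtain ⟨x, hx⟩ := fixed_point_aux (G := G) (V := WeakDual ℝ F) N
    (fun x hx => by
      rw [hNe, norm_eq_zero] at hx
      exact (WeakDual.toStrongDual (𝕜 := ℝ) (E := F)).map_eq_zero_iff.mp hx)
    (fun c r => by rw [hcball]; exact WeakDual.isClosed_closedBall _ _)
    (fun r => by
      have h := hcball 0 r
      simp only [sub_zero] at h
      rw [h]; exact WeakDual.isCompact_closedBall _ _)
    (fun n => StrongDual.toWeakDual (TopologicalSpace.denseSeq (F →L[ℝ] ℝ) n))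
    (fun ε hε x => by
      obtain ⟨n, hn⟩ := (TopologicalSpace.denseRange_denseSeq (F →L[ℝ] ℝ)).exists_dist_lt
        (WeakDual.toStrongDual x) hε
      refine ⟨n, ?_⟩
      rw [dist_eq_norm] at hn
      exact hn)
    T
    (fun g => by
      refine WeakDual.continuous_of_continuous_eval fun v => ?_
      exact (WeakDual.eval_continuous (ρ g⁻¹ v)).add continuous_const)
    (fun x => by
      apply (WeakDual.toStrongDual (𝕜 := ℝ) (E := F)).injective
      rw [hTe, hb1, add_zero]
      ext v; simp [contragredient])
    (fun g h x => by
      apply (WeakDual.toStrongDual (𝕜 := ℝ) (E := F)).injective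
      rw [hTe, hTe, hTe, hcoc]
      ext v; simp [contragredient]; ring)
    (fun g x y => by
      rw [hNe, hNe, map_sub, hTe, hTe, add_sub_add_right_eq_sub, hsub, hiso, map_sub])
    (fun g x y a c hac => by
      apply (WeakDual.toStrongDual (𝕜 := ℝ) (E := F)).injective
      simp only [map_add, map_smul, hTe]
      have : b g = (a + c) • b g := by rw [hac, one_smul]
      conv_lhs => rw [this]
      ext v; simp [contragredient]; ring)
    C
    (fun g => by
      rw [hNe, hTe, map_zero]
      have : contragredient ρ g 0 = 0 := by ext v; simp [contragredient]
      rw [this, zero_add]; exact hC g)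
  refine ⟨-WeakDual.toStrongDual x, fun g => ?_⟩
  have h := congrArg WeakDual.toStrongDual (hx g)
  rw [hTe] at h
  have h2 : contragredient ρ g (-WeakDual.toStrongDual x) =
      -contragredient ρ g (WeakDual.toStrongDual x) := by
    ext v; simp [contragredient]
  rw [h2, sub_neg_eq_add]
  rw [eq_neg_add_iff_add_eq]
  exact h
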